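/- Let F be a field of characteristic p (possibly 0) with algebraic closure F̄, and let N ∈ ℕ. There exist constants C(N) and C'(N), depending only on N, with the following property. Let f ∈ F[t][x₁,…,x_d] be square-free as an element of F̄[t][x₁,…,x_d], and let a₁, b₁, c₁, …, a_d, b_d, c_d ∈ F[t] with gcd(a_i, b_i) = 1 for all i, deg_t f ≤ N, total degree of f in (x₁,…,x_d) at most N, and deg a_i, deg b_i, deg c_i ≤ N for all i. Then there exists P ∈ F[x₁,…,x_{2d}] of total degree at most C'(N) such that every (β₁,…,β_{2d}) ∈ F^{2d} for which f(t, a₁(t)β₁ + b₁(t)β_{d+1} + c₁(t), …, a_d(t)β_d + b_d(t)β_{2d} + c_d(t)) is not separable satisfies P(β₁,…,β_{2d}) = 0. Moreover, P can be chosen nonzero whenever at least one of the following holds: (i) p = 0 or p > C(N); (ii) for every i, a_i ≠ 0 and b_i/a_i ∉ F(t^p). -/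

import Mathlib

/-- The condition that the rational function `b/a ∈ F(t)` does not lie in the subfield
`F(t^p)` generated over (the image of) `F` by `t^p`, where `p = ringChar F`. -/
def notInFtp (F : Type*) [Field F] (a b : Polynomial F) : Prop :=
  (algebraMap (Polynomial F) (RatFunc F)) b / (algebraMap (Polynomial F) (RatFunc F)) a ∉
    Subfield.closure (Set.range (RatFunc.C (K := F)) ∪ {RatFunc.X ^ ringChar F})

/-!
Replace `β, γ` by indeterminates and let `g ∈ F[β, γ][t]` be the polynomial obtained from `f` by
the substitution `x_i = a_i β_i + b_i γ_i + c_i`; take `P = lc(g) · Res(g, ∂g/∂t)`. Since `a_i` and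
`b_i` are coprime, the substitution is the inclusion `F[t][x] ⊆ F[t][x, y]` followed by an
invertible affine change of coordinates, so `g` is square-free and its prime factors are
substitutions of factors of `f`. If `P = 0`, then some prime factor `h` of `g`, substituted from
`h₀`, has positive `t`-degree and `∂h/∂t = 0`. This forces `p > 0` and `p ≤ deg_t h`, which settles
the case of large `p`. Moreover `∂h/∂β_i` and `∂h/∂γ_i` are `a_i G` and `b_i G`, where `G` is the
substitution of `∂h₀/∂x_i`, and both have `t`-derivative zero; so `(a_i b_i' - a_i' b_i) G = 0`. If
these Wronskians do not vanish, as when `b_i / a_i ∉ F(t^p)`, all partial derivatives of `h` do, and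
`h` is a `p`-th power over any perfect field, contradicting primality.
-/

section

open Polynomial

section PrimeFactors

theorem exists_prime_dvd_and_dvd_map {M N H : Type*} [CommMonoidWithZero M]
    [UniqueFactorizationMonoid M] [CommMonoidWithZero N] [FunLike H M N] [MonoidHomClass H M N]
    (φ : H) {g : M} (hg : g ≠ 0) {z : N} (hz : Prime z) (hzg : z ∣ φ g) :
    ∃ q, Prime q ∧ q ∣ g ∧ z ∣ φ q := by
  induction g using UniqueFactorizationMonoid.induction_on_prime with
  | h₁ => exact absurd rfl hg
  | h₂ u hu => exact absurd (isUnit_of_dvd_unit hzg (hu.map φ)) hz.not_isUnit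
  | h₃ r q hr hq ih =>
    rw [map_mul] at hzg
    rcases hz.dvd_or_dvd hzg with hzq | hzr
    · exact ⟨q, hq, dvd_mul_right q r, hzq⟩
    · obtain ⟨q', hq', hdvd, hzq'⟩ := ih hr hzr
      exact ⟨q', hq', hdvd.mul_left q, hzq'⟩

theorem resultant_map_of_injective {A B : Type*} [CommRing A] [CommRing B] {φ : A →+* B}
    (hφ : Function.Injective φ) (g g' : A[X]) :
    (g.map φ).resultant (g'.map φ) = φ (g.resultant g') := by
  rw [natDegree_map_eq_of_injective hφ, natDegree_map_eq_of_injective hφ, resultant_map_map]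

theorem exists_prime_dvd_dvd_of_resultant_eq_zero {A : Type*} [CommRing A] [IsDomain A]
    [UniqueFactorizationMonoid A] {g g' : A[X]} (hg : g ≠ 0) (hres : g.resultant g' = 0) :
    ∃ q : A[X], Prime q ∧ q.natDegree ≠ 0 ∧ q ∣ g ∧ q ∣ g' := by
  obtain ⟨_⟩ : Nonempty (NormalizedGCDMonoid A) := inferInstance
  let K := FractionRing A
  have hinj : Function.Injective (algebraMap A K) := IsFractionRing.injective A K
  obtain ⟨hne, hncop⟩ := resultant_eq_zero_iff.1
    ((resultant_map_of_injective hinj g g').trans (by rw [hres, map_zero]))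
  obtain ⟨z, hz, hzg, hzg'⟩ : ∃ z : K[X], Irreducible z ∧
      z ∣ g.map (algebraMap A K) ∧ z ∣ g'.map (algebraMap A K) := by
    by_contra! hno
    exact hncop (isCoprime_of_irreducible_dvd (by tauto) hno)
  obtain ⟨q, hq, hqg, hzq⟩ :=
    exists_prime_dvd_and_dvd_map (mapRingHom (algebraMap A K)) hg hz.prime hzg
  rw [coe_mapRingHom] at hzq
  have hdeg : q.natDegree ≠ 0 := fun h => by
    rw [eq_C_of_natDegree_eq_zero h, map_C] at hzq
    refine hz.not_isUnit (isUnit_of_dvd_unit hzq (isUnit_C.2 (IsUnit.mk0 _ ?_)))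
    rw [map_ne_zero_iff _ hinj]
    exact fun h0 => hq.ne_zero (by rw [eq_C_of_natDegree_eq_zero h, h0, C_0])
  have hprim : q.IsPrimitive := hq.irreducible.isPrimitive hdeg
  have hqK : Irreducible (q.map (algebraMap A K)) :=
    hprim.irreducible_iff_irreducible_map_fraction_map.1 hq.irreducible
  exact ⟨q, hq, hdeg, hqg, hprim.dvd_of_fraction_map_dvd_fraction_map (K := K)
    ((hz.associated_of_dvd hqK hzq).symm.dvd.trans hzg')⟩

theorem derivative_eq_zero_of_prime_dvd_derivative {A : Type*} [CommRing A] [NoZeroDivisors A]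
    {g q : A[X]} (hg : Squarefree g) (hq : Prime q) (hqg : q ∣ g) (hqg' : q ∣ derivative g) :
    derivative q = 0 := by
  obtain ⟨r, rfl⟩ := hqg
  rw [derivative_mul] at hqg'
  have hdvd : q ∣ derivative q * r := (dvd_add_left (dvd_mul_right q _)).1 hqg'
  rcases hq.dvd_or_dvd hdvd with h | h
  · exact dvd_derivative_iff.1 h
  · exact absurd (hg q (mul_dvd_mul_left q h)) hq.not_isUnit

theorem squarefree_map_equiv {M N H : Type*} [Monoid M] [Monoid N] [EquivLike H M N]
    [MulEquivClass H M N] (e : H) {m : M} (hm : Squarefree m) : Squarefree (e m) := fun n hn => by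
  obtain ⟨n, rfl⟩ := EquivLike.surjective e n
  rw [← map_mul, map_dvd_iff] at hn
  exact (hm n hn).map e

end PrimeFactors

section VanishingDerivatives

theorem dvd_of_derivative_eq_zero_of_coeff_ne_zero {R : Type*} [CommSemiring R] [NoZeroDivisors R]
    (p : ℕ) [CharP R p] {r : R[X]} (hr : derivative r = 0) {n : ℕ} (hn : r.coeff n ≠ 0) :
    p ∣ n := by
  obtain _ | n := n
  · exact dvd_zero p
  · have hcoeff := congrArg (coeff · n) hr
    simp only [coeff_derivative, coeff_zero, mul_eq_zero, hn, false_or] at hcoeff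
    rw [← CharP.cast_eq_zero_iff R p]
    exact_mod_cast hcoeff

theorem dvd_of_pderiv_eq_zero_of_coeff_ne_zero {R τ : Type*} [CommSemiring R] [NoZeroDivisors R]
    (p : ℕ) [CharP R p] {f : MvPolynomial τ R} {i : τ} (hf : MvPolynomial.pderiv i f = 0)
    {s : τ →₀ ℕ} (hs : f.coeff s ≠ 0) : p ∣ s i := by
  rcases Nat.eq_zero_or_pos (s i) with hsi | hsi
  · rw [hsi]
    exact dvd_zero p
  have hcoeff := congrArg (MvPolynomial.coeff (s - Finsupp.single i 1)) hf
  rw [MvPolynomial.coeff_pderiv, tsub_add_cancel_of_le (Finsupp.single_le_iff.2 hsi)] at hcoeff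
  simp only [MvPolynomial.coeff_zero, mul_eq_zero, hs, false_or] at hcoeff
  rw [← CharP.cast_eq_zero_iff R p, ← Nat.sub_add_cancel hsi]
  simpa using hcoeff

theorem exists_pow_eq_of_derivative_eq_zero {R : Type*} [CommRing R] [NoZeroDivisors R] (p : ℕ)
    [Fact p.Prime] [CharP R p] [PerfectRing R p] {r : R[X]} (hr : derivative r = 0) :
    ∃ q, q ^ p = r := by
  rw [← expand_contract p hr (Fact.out : p.Prime).ne_zero, polynomial_expand_eq]
  exact ⟨_, rfl⟩

theorem exists_pow_eq_of_pderiv_eq_zero {R τ : Type*} [CommRing R] [NoZeroDivisors R] (p : ℕ)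
    [Fact p.Prime] [CharP R p] {f : MvPolynomial τ R} (hf : ∀ i, MvPolynomial.pderiv i f = 0)
    (hcoeff : ∀ s, ∃ r, r ^ p = f.coeff s) : ∃ q, q ^ p = f := by
  have : ExpChar (MvPolynomial τ R) p := .prime Fact.out
  suffices f ∈ (frobenius (MvPolynomial τ R) p).range from this
  rw [← MvPolynomial.support_sum_monomial_coeff f]
  refine sum_mem fun s hs => ?_
  obtain ⟨r, hr⟩ := hcoeff s
  have hdvd : ∀ i, p ∣ s i := fun i =>
    dvd_of_pderiv_eq_zero_of_coeff_ne_zero p (hf i) (MvPolynomial.mem_support_iff.1 hs)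
  have hs' : p • s.mapRange (· / p) (Nat.zero_div p) = s := by
    ext i
    simp [Nat.mul_div_cancel' (hdvd i)]
  exact ⟨MvPolynomial.monomial (s.mapRange (· / p) (Nat.zero_div p)) r, by
    rw [frobenius_def, MvPolynomial.monomial_pow, hr, hs']⟩

variable {F : Type*} [Field F]

theorem algebraMap_mem_closure_of_derivative_eq_zero {r : F[X]} (hr : derivative r = 0) :
    algebraMap F[X] (RatFunc F) r ∈
      Subfield.closure (Set.range (RatFunc.C (K := F)) ∪ {RatFunc.X ^ ringChar F}) := by
  rw [r.as_sum_support_C_mul_X_pow, map_sum]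
  refine sum_mem fun n hn => ?_
  obtain ⟨k, rfl⟩ :=
    dvd_of_derivative_eq_zero_of_coeff_ne_zero (ringChar F) hr (mem_support_iff.1 hn)
  rw [map_mul, map_pow, RatFunc.algebraMap_C, RatFunc.algebraMap_X, pow_mul]
  refine mul_mem (Subfield.subset_closure (Or.inl ⟨_, rfl⟩)) (pow_mem ?_ k)
  exact Subfield.subset_closure (Or.inr rfl)

theorem wronskian_ne_zero_of_notInFtp {a b : F[X]} (hab : IsCoprime a b) (h : notInFtp F a b) :
    wronskian a b ≠ 0 := fun hw => by
  obtain ⟨ha, hb⟩ := hab.wronskian_eq_zero_iff.1 hw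
  exact h (div_mem (algebraMap_mem_closure_of_derivative_eq_zero hb)
    (algebraMap_mem_closure_of_derivative_eq_zero ha))

end VanishingDerivatives

section DerivativeResultant

variable {A B : Type*} [CommRing A] [CommRing B]

/-- The product of the leading coefficient of `g` with the resultant of `g` and `g'`: an element
whose specializations are units only at separable specializations of `g`. The resultant alone
would not do, as it is `1` for constant `g`. -/
noncomputable def derivativeResultant (g : A[X]) : A :=
  g.leadingCoeff * g.resultant (derivative g)

theorem derivativeResultant_map_of_injective {φ : A →+* B} (hφ : Function.Injective φ)
    (g : A[X]) : derivativeResultant (g.map φ) = φ (derivativeResultant g) := by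
  rw [derivativeResultant, derivativeResultant, leadingCoeff_map_of_injective hφ, derivative_map,
    resultant_map_of_injective hφ, map_mul]

theorem separable_map_of_isUnit_derivativeResultant (φ : A →+* B) {g : A[X]}
    (hg : IsUnit (φ (derivativeResultant g))) : (g.map φ).Separable := by
  rw [derivativeResultant, map_mul, IsUnit.mul_iff] at hg
  obtain ⟨hlead, hres⟩ := hg
  by_cases hdeg : g.natDegree = 0
  · rw [eq_C_of_natDegree_eq_zero hdeg, map_C, separable_C]
    rwa [leadingCoeff, hdeg] at hlead
  · obtain ⟨u, v, -, -, huv⟩ :=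
      exists_mul_add_mul_eq_C_resultant g (derivative g) le_rfl le_rfl (Or.inl hdeg)
    have hspec : g.map φ * u.map φ + derivative (g.map φ) * v.map φ =
        C (φ (g.resultant (derivative g))) := by
      rw [derivative_map, ← Polynomial.map_mul, ← Polynomial.map_mul, ← Polynomial.map_add, huv,
        map_C]
    obtain ⟨w, hw⟩ := (isUnit_C.2 hres).exists_left_inv
    exact ⟨w * u.map φ, w * v.map φ, by linear_combination w * hspec + hw⟩

theorem totalDegree_det_le {ι σ : Type*} [Fintype ι] [DecidableEq ι]
    {M : Matrix ι ι (MvPolynomial σ A)} {n : ℕ} (hM : ∀ i j, (M i j).totalDegree ≤ n) :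
    M.det.totalDegree ≤ Fintype.card ι * n := by
  rw [Matrix.det_apply]
  refine MvPolynomial.totalDegree_finsetSum_le fun s _ => ?_
  rw [Units.smul_def]
  calc _ ≤ (∏ i, M (s i) i).totalDegree := MvPolynomial.totalDegree_smul_le _ _
    _ ≤ ∑ i, (M (s i) i).totalDegree := MvPolynomial.totalDegree_finsetProd _ _
    _ ≤ Fintype.card ι * n := by
      simpa using Finset.sum_le_card_nsmul Finset.univ _ n fun i _ => hM (s i) i

theorem totalDegree_resultant_le {σ : Type*} {g g' : (MvPolynomial σ A)[X]} {n : ℕ}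
    (hg : ∀ k, (g.coeff k).totalDegree ≤ n) (hg' : ∀ k, (g'.coeff k).totalDegree ≤ n) :
    (g.resultant g').totalDegree ≤ (g.natDegree + g'.natDegree) * n := by
  refine (totalDegree_det_le fun i j => ?_).trans_eq (by rw [Fintype.card_fin])
  rw [sylvester, Matrix.of_apply]
  induction j using Fin.addCases with
  | left j => simp only [Fin.addCases_left]; split_ifs <;> simp [hg']
  | right j => simp only [Fin.addCases_right]; split_ifs <;> simp [hg]

theorem totalDegree_derivativeResultant_le {σ : Type*} {g : (MvPolynomial σ A)[X]} {n m : ℕ}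
    (hg : ∀ k, (g.coeff k).totalDegree ≤ n) (hdeg : g.natDegree ≤ m) :
    (derivativeResultant g).totalDegree ≤ n + 2 * m * n := by
  have hg' : ∀ k, ((derivative g).coeff k).totalDegree ≤ n := fun k => by
    rw [coeff_derivative, ← Nat.cast_succ, ← nsmul_eq_mul']
    exact (MvPolynomial.totalDegree_smul_le _ _).trans (hg _)
  refine (MvPolynomial.totalDegree_mul _ _).trans (add_le_add (hg _) ?_)
  refine (totalDegree_resultant_le hg hg').trans (Nat.mul_le_mul_right n ?_)
  have := natDegree_derivative_le g
  omega

end DerivativeResultant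

section Rename

variable {σ τ R : Type*} [CommRing R]

theorem vars_subset_vars_of_dvd [NoZeroDivisors R] {f g : MvPolynomial σ R} (hg : g ≠ 0)
    (hfg : f ∣ g) : f.vars ⊆ g.vars := fun i hi => by
  obtain ⟨q, rfl⟩ := hfg
  rw [MvPolynomial.mem_vars_iff_degreeOf_ne_zero] at hi ⊢
  rw [MvPolynomial.degreeOf_mul_eq (left_ne_zero_of_mul hg) (right_ne_zero_of_mul hg)]
  omega

theorem exists_rename_eq_of_dvd_rename [NoZeroDivisors R] {j : σ → τ} (hj : Function.Injective j)
    {f : MvPolynomial σ R} (hf : f ≠ 0) {h : MvPolynomial τ R}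
    (hdvd : h ∣ MvPolynomial.rename j f) : ∃ h₀, MvPolynomial.rename j h₀ = h := by
  classical
  have hne : MvPolynomial.rename j f ≠ 0 :=
    (map_ne_zero_iff _ (MvPolynomial.rename_injective j hj)).2 hf
  refine MvPolynomial.exists_rename_eq_of_vars_subset_range h j hj fun i hi => ?_
  obtain ⟨k, -, rfl⟩ :=
    Finset.mem_image.1 (MvPolynomial.vars_rename j f (vars_subset_vars_of_dvd hne hdvd hi))
  exact ⟨k, rfl⟩

theorem squarefree_rename [IsDomain R] {j : σ → τ} (hj : Function.Injective j)
    {f : MvPolynomial σ R} (hf : Squarefree f) : Squarefree (MvPolynomial.rename j f) := by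
  intro h hdvd
  obtain ⟨h₀, rfl⟩ := exists_rename_eq_of_dvd_rename hj hf.ne_zero ((dvd_mul_right h h).trans hdvd)
  have hdvd₀ := map_dvd (MvPolynomial.killCompl hj) hdvd
  rw [map_mul, MvPolynomial.killCompl_rename_app, MvPolynomial.killCompl_rename_app] at hdvd₀
  exact (hf h₀ hdvd₀).map _

end Rename

section DegreeOfHom

variable {σ τ A S : Type*} [CommRing A] [CommRing S]

theorem natDegree_map_le_of_totalDegree_le (φ : MvPolynomial σ S →+* A[X]) {f : MvPolynomial σ S}
    {n m k : ℕ} (hC : ∀ s, (φ (MvPolynomial.C (f.coeff s))).natDegree ≤ m)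
    (hX : ∀ i, (φ (MvPolynomial.X i)).natDegree ≤ k) (hf : f.totalDegree ≤ n) :
    (φ f).natDegree ≤ m + n * k := by
  rw [f.as_sum, map_sum]
  refine natDegree_sum_le_of_forall_le _ _ fun s hs => ?_
  rw [MvPolynomial.monomial_eq, map_mul, Finsupp.prod, map_prod]
  refine natDegree_mul_le.trans (add_le_add (hC s) ((natDegree_prod_le _ _).trans ?_))
  calc ∑ i ∈ s.support, (φ (MvPolynomial.X i ^ s i)).natDegree
      ≤ ∑ i ∈ s.support, s i * k := Finset.sum_le_sum fun i _ => by
        rw [map_pow]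
        exact natDegree_pow_le.trans (Nat.mul_le_mul_left _ (hX i))
    _ = (s.sum fun _ e => e) * k := by rw [← Finset.sum_mul, Finsupp.sum]
    _ ≤ n * k := Nat.mul_le_mul_right k ((MvPolynomial.le_totalDegree hs).trans hf)

theorem totalDegree_aeval_le {L : σ → MvPolynomial τ S} {k : ℕ} (hL : ∀ i, (L i).totalDegree ≤ k)
    (f : MvPolynomial σ S) : (MvPolynomial.aeval L f).totalDegree ≤ f.totalDegree * k := by
  rw [MvPolynomial.aeval_def, MvPolynomial.eval₂_eq]
  refine MvPolynomial.totalDegree_finsetSum_le fun s hs => ?_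
  rw [← Algebra.smul_def]
  calc _ ≤ (∏ i ∈ s.support, L i ^ s i).totalDegree := MvPolynomial.totalDegree_smul_le _ _
    _ ≤ ∑ i ∈ s.support, (L i ^ s i).totalDegree := MvPolynomial.totalDegree_finsetProd _ _
    _ ≤ ∑ i ∈ s.support, s i * k := Finset.sum_le_sum fun i _ =>
        (MvPolynomial.totalDegree_pow _ _).trans (Nat.mul_le_mul_left _ (hL i))
    _ = (s.sum fun _ e => e) * k := by rw [← Finset.sum_mul, Finsupp.sum]
    _ ≤ f.totalDegree * k := Nat.mul_le_mul_right k (MvPolynomial.le_totalDegree hs)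

end DegreeOfHom

section SwapEquiv

variable {R τ : Type*} [CommRing R]

/-- The identification of `R[t][x]` with `R[x][t]`, for a family `x` of variables indexed
by `τ`. -/
noncomputable def swapEquiv (R τ : Type*) [CommRing R] :
    MvPolynomial τ R[X] ≃ₐ[R] (MvPolynomial τ R)[X] :=
  (MvPolynomial.optionEquivRight R τ).symm.trans (MvPolynomial.optionEquivLeft R τ)

theorem swapEquiv_X (i : τ) : swapEquiv R τ (MvPolynomial.X i) = C (MvPolynomial.X i) := by
  simp [swapEquiv]

theorem swapEquiv_C (r : R[X]) : swapEquiv R τ (MvPolynomial.C r) = r.map MvPolynomial.C := by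
  induction r using Polynomial.induction_on' with
  | add r r' hr hr' => rw [map_add, map_add, hr, hr', Polynomial.map_add]
  | monomial n r =>
    rw [← C_mul_X_pow_eq_monomial]
    simp [swapEquiv]

theorem coeff_coeff_swapEquiv (f : MvPolynomial τ R[X]) (n : ℕ) (s : τ →₀ ℕ) :
    ((swapEquiv R τ f).coeff n).coeff s = (f.coeff s).coeff n := by
  classical
  induction f using MvPolynomial.induction_on' with
  | add f g hf hg => simp only [map_add, coeff_add, MvPolynomial.coeff_add, hf, hg]
  | monomial m r =>
    have hmono : swapEquiv R τ (MvPolynomial.monomial m r) =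
        r.map MvPolynomial.C * C (MvPolynomial.monomial m 1) := by
      rw [MvPolynomial.monomial_eq, map_mul, swapEquiv_C, MvPolynomial.monomial_eq, map_one,
        one_mul]
      simp only [Finsupp.prod, map_prod, map_pow, swapEquiv_X]
    rw [hmono, coeff_mul_C, coeff_map, MvPolynomial.coeff_C_mul, MvPolynomial.coeff_monomial,
      MvPolynomial.coeff_monomial]
    split_ifs <;> simp

theorem totalDegree_coeff_swapEquiv_le (f : MvPolynomial τ R[X]) (n : ℕ) :
    ((swapEquiv R τ f).coeff n).totalDegree ≤ f.totalDegree :=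
  Finset.sup_mono fun s hs => by
    rw [MvPolynomial.mem_support_iff, coeff_coeff_swapEquiv] at hs
    exact MvPolynomial.mem_support_iff.2 fun h => hs (by rw [h, coeff_zero])

theorem derivative_swapEquiv_eq_zero_iff {f : MvPolynomial τ R[X]} :
    derivative (swapEquiv R τ f) = 0 ↔ ∀ s, derivative (f.coeff s) = 0 := by
  have hcoeff (s : τ →₀ ℕ) (n : ℕ) : ((derivative (swapEquiv R τ f)).coeff n).coeff s =
      (derivative (f.coeff s)).coeff n := by
    simp only [coeff_derivative, ← Nat.cast_succ, ← nsmul_eq_mul', MvPolynomial.coeff_smul,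
      coeff_coeff_swapEquiv]
  constructor
  · intro h s
    ext n
    rw [← hcoeff, h, coeff_zero, coeff_zero, MvPolynomial.coeff_zero]
  · intro h
    ext n s
    rw [hcoeff, h, coeff_zero, coeff_zero, MvPolynomial.coeff_zero]

theorem derivative_swapEquiv_pderiv_eq_zero {f : MvPolynomial τ R[X]}
    (hf : derivative (swapEquiv R τ f) = 0) (i : τ) :
    derivative (swapEquiv R τ (MvPolynomial.pderiv i f)) = 0 := by
  rw [derivative_swapEquiv_eq_zero_iff] at hf ⊢
  intro s
  rw [MvPolynomial.coeff_pderiv, ← Nat.cast_succ, derivative_mul, hf, derivative_natCast]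
  simp

theorem swapEquiv_map {S : Type*} [CommRing S] (φ : R →+* S) (f : MvPolynomial τ R[X]) :
    swapEquiv S τ (MvPolynomial.map (mapRingHom φ) f) =
      (swapEquiv R τ f).map (MvPolynomial.map φ) := by
  ext n s
  simp only [coeff_map, MvPolynomial.coeff_map, coeff_coeff_swapEquiv, coe_mapRingHom]

theorem map_eval_swapEquiv (β : τ → R) (f : MvPolynomial τ R[X]) :
    (swapEquiv R τ f).map (MvPolynomial.eval β) = MvPolynomial.eval (C ∘ β) f := by
  induction f using MvPolynomial.induction_on with
  | C r =>
    rw [swapEquiv_C, Polynomial.map_map, MvPolynomial.eval_C]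
    convert Polynomial.map_id
    ext r
    simp
  | add f g hf hg => rw [map_add, Polynomial.map_add, hf, hg, map_add]
  | mul_X f i hf =>
    rw [map_mul, Polynomial.map_mul, hf, swapEquiv_X, map_C, MvPolynomial.eval_X, map_mul,
      MvPolynomial.eval_X, Function.comp_apply]

end SwapEquiv

section LinSubst

variable {σ S : Type*} [CommRing S]

/-- The substitution `x i ↦ a i * y i + b i * z i + c i`, the variables `y` and `z` being indexed
by the left and the right copy of `σ`. -/
noncomputable def linSubst (a b c : σ → S) : MvPolynomial σ S →ₐ[S] MvPolynomial (σ ⊕ σ) S :=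
  MvPolynomial.aeval fun i => MvPolynomial.C (a i) * MvPolynomial.X (.inl i) +
    MvPolynomial.C (b i) * MvPolynomial.X (.inr i) + MvPolynomial.C (c i)

variable {a b c : σ → S}

theorem linSubst_X (a b c : σ → S) (i : σ) :
    linSubst a b c (MvPolynomial.X i) = MvPolynomial.C (a i) * MvPolynomial.X (.inl i) +
      MvPolynomial.C (b i) * MvPolynomial.X (.inr i) + MvPolynomial.C (c i) :=
  MvPolynomial.aeval_X _ i

theorem linSubst_C (a b c : σ → S) (r : S) :
    linSubst a b c (MvPolynomial.C r) = MvPolynomial.C r :=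
  MvPolynomial.aeval_C _ r

theorem eval_linSubst (β γ : σ → S) (f : MvPolynomial σ S) :
    MvPolynomial.eval (Sum.elim β γ) (linSubst a b c f) =
      MvPolynomial.eval (fun i => a i * β i + b i * γ i + c i) f := by
  induction f using MvPolynomial.induction_on with
  | C r => rw [linSubst_C, MvPolynomial.eval_C, MvPolynomial.eval_C]
  | add f g hf hg => rw [map_add, map_add, hf, hg, map_add]
  | mul_X f i hf => simp [hf, linSubst_X]

theorem linSubst_map {S' : Type*} [CommRing S'] (φ : S →+* S') (f : MvPolynomial σ S) :
    linSubst (φ ∘ a) (φ ∘ b) (φ ∘ c) (MvPolynomial.map φ f) =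
      MvPolynomial.map φ (linSubst a b c f) := by
  induction f using MvPolynomial.induction_on with
  | C r => simp only [MvPolynomial.map_C, linSubst_C]
  | add f g hf hg => rw [map_add, map_add, hf, hg, map_add, map_add]
  | mul_X f i hf => simp [hf, linSubst_X]

theorem totalDegree_linSubst_le (a b c : σ → S) (f : MvPolynomial σ S) :
    (linSubst a b c f).totalDegree ≤ f.totalDegree := by
  refine (totalDegree_aeval_le (k := 1) (fun i => ?_) f).trans_eq (mul_one _)
  have hX (r : S) (j : σ ⊕ σ) : (MvPolynomial.C r * MvPolynomial.X j).totalDegree ≤ 1 := by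
    rw [MvPolynomial.C_mul_X_eq_monomial]
    exact (MvPolynomial.totalDegree_monomial_le _ _).trans_eq (by simp)
  refine (MvPolynomial.totalDegree_add _ _).trans (max_le ?_ (by simp))
  exact (MvPolynomial.totalDegree_add _ _).trans (max_le (hX _ _) (hX _ _))

theorem derivation_apply_algHom {A : Type*} [CommRing A] [Algebra S A] (D : Derivation S A A)
    (φ : MvPolynomial σ S →ₐ[S] A) {i : σ} {r : A}
    (hX : ∀ j, D (φ (MvPolynomial.X j)) = r * φ (MvPolynomial.pderiv i (MvPolynomial.X j)))
    (f : MvPolynomial σ S) : D (φ f) = r * φ (MvPolynomial.pderiv i f) := by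
  induction f using MvPolynomial.induction_on with
  | C s => simp [← MvPolynomial.algebraMap_eq]
  | add f g hf hg => simp only [map_add, hf, hg, mul_add]
  | mul_X f j hf =>
    simp only [map_mul, Derivation.leibniz, smul_eq_mul, map_add, hf, hX]
    ring

theorem pderiv_inl_linSubst (a b c : σ → S) (i : σ) (f : MvPolynomial σ S) :
    MvPolynomial.pderiv (.inl i) (linSubst a b c f) =
      MvPolynomial.C (a i) * linSubst a b c (MvPolynomial.pderiv i f) := by
  classical
  refine derivation_apply_algHom _ _ (fun j => ?_) f
  rcases eq_or_ne j i with rfl | hj <;> simp [linSubst_X, MvPolynomial.pderiv_X, *]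

theorem pderiv_inr_linSubst (a b c : σ → S) (i : σ) (f : MvPolynomial σ S) :
    MvPolynomial.pderiv (.inr i) (linSubst a b c f) =
      MvPolynomial.C (b i) * linSubst a b c (MvPolynomial.pderiv i f) := by
  classical
  refine derivation_apply_algHom _ _ (fun j => ?_) f
  rcases eq_or_ne j i with rfl | hj <;> simp [linSubst_X, MvPolynomial.pderiv_X, *]

theorem map_eval_swapEquiv_linSubst {A : Type*} [CommRing A] (a b c : σ → A[X]) (β γ : σ → A)
    (f : MvPolynomial σ A[X]) :
    (swapEquiv A (σ ⊕ σ) (linSubst a b c f)).map (MvPolynomial.eval (Sum.elim β γ)) =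
      MvPolynomial.eval (fun i => a i * C (β i) + b i * C (γ i) + c i) f := by
  rw [map_eval_swapEquiv, Sum.comp_elim, eval_linSubst]
  rfl

theorem natDegree_swapEquiv_linSubst_le {A : Type*} [CommRing A] {a b c : σ → A[X]}
    {f : MvPolynomial σ A[X]} {k m n : ℕ} (hf : f.totalDegree ≤ n)
    (hcoeff : ∀ s, (f.coeff s).natDegree ≤ m)
    (habc : ∀ i, (a i).natDegree ≤ k ∧ (b i).natDegree ≤ k ∧ (c i).natDegree ≤ k) :
    (swapEquiv A (σ ⊕ σ) (linSubst a b c f)).natDegree ≤ m + n * k := by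
  have hC (r : A[X]) {l : ℕ} (hr : r.natDegree ≤ l) :
      (swapEquiv A (σ ⊕ σ) (MvPolynomial.C r)).natDegree ≤ l := by
    rw [swapEquiv_C]
    exact natDegree_map_le.trans hr
  have hCX (r : A[X]) (j : σ ⊕ σ) {l : ℕ} (hr : r.natDegree ≤ l) :
      (swapEquiv A (σ ⊕ σ) (MvPolynomial.C r * MvPolynomial.X j)).natDegree ≤ l := by
    rw [map_mul, swapEquiv_X]
    exact (natDegree_mul_C_le _ _).trans (hC r hr)
  let φ := (swapEquiv A (σ ⊕ σ)).toRingEquiv.toRingHom.comp (linSubst a b c).toRingHom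
  have hφ (g : MvPolynomial σ A[X]) : φ g = swapEquiv A (σ ⊕ σ) (linSubst a b c g) := rfl
  rw [← hφ]
  refine natDegree_map_le_of_totalDegree_le φ (fun s => ?_) (fun i => ?_) hf
  · rw [hφ, linSubst_C]
    exact hC _ (hcoeff s)
  · obtain ⟨ha, hb, hc⟩ := habc i
    rw [hφ, linSubst_X, map_add, map_add]
    exact natDegree_add_le_of_degree_le
      (natDegree_add_le_of_degree_le (hCX _ _ ha) (hCX _ _ hb)) (hC _ hc)

theorem exists_algEquiv_rename_inl_eq_linSubst (hab : ∀ i, IsCoprime (a i) (b i)) (c : σ → S) :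
    ∃ e : MvPolynomial (σ ⊕ σ) S ≃ₐ[S] MvPolynomial (σ ⊕ σ) S,
      ∀ f, e (MvPolynomial.rename .inl f) = linSubst a b c f := by
  choose u v huv using hab
  -- The linear part of `e` has the block `(a, b; -v, u)`, of determinant `u * a + v * b = 1`.
  replace huv (i : σ) := congrArg (MvPolynomial.C (σ := σ ⊕ σ)) (huv i)
  simp only [map_add, map_mul, map_one] at huv
  let φ : MvPolynomial (σ ⊕ σ) S →ₐ[S] MvPolynomial (σ ⊕ σ) S := MvPolynomial.aeval <| Sum.elim
    (fun i => linSubst a b c (MvPolynomial.X i))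
    (fun i => MvPolynomial.C (u i) * MvPolynomial.X (.inr i) -
      MvPolynomial.C (v i) * MvPolynomial.X (.inl i))
  let ψ : MvPolynomial (σ ⊕ σ) S →ₐ[S] MvPolynomial (σ ⊕ σ) S := MvPolynomial.aeval <| Sum.elim
    (fun i => MvPolynomial.C (u i) * (MvPolynomial.X (.inl i) - MvPolynomial.C (c i)) -
      MvPolynomial.C (b i) * MvPolynomial.X (.inr i))
    (fun i => MvPolynomial.C (v i) * (MvPolynomial.X (.inl i) - MvPolynomial.C (c i)) +
      MvPolynomial.C (a i) * MvPolynomial.X (.inr i))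
  have hφψ : φ.comp ψ = AlgHom.id S _ := MvPolynomial.algHom_ext fun j => by
    obtain i | i := j <;>
      simp only [φ, ψ, linSubst_X, AlgHom.comp_apply, AlgHom.id_apply, MvPolynomial.aeval_X,
        Sum.elim_inl, Sum.elim_inr, map_add, map_sub, map_mul, MvPolynomial.aeval_C,
        MvPolynomial.algebraMap_eq]
    · linear_combination MvPolynomial.X (.inl i) * huv i
    · linear_combination MvPolynomial.X (.inr i) * huv i
  have hψφ : ψ.comp φ = AlgHom.id S _ := MvPolynomial.algHom_ext fun j => by
    obtain i | i := j <;>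
      simp only [φ, ψ, linSubst_X, AlgHom.comp_apply, AlgHom.id_apply, MvPolynomial.aeval_X,
        Sum.elim_inl, Sum.elim_inr, map_add, map_sub, map_mul, MvPolynomial.aeval_C,
        MvPolynomial.algebraMap_eq]
    · linear_combination (MvPolynomial.X (.inl i) - MvPolynomial.C (c i)) * huv i
    · linear_combination MvPolynomial.X (.inr i) * huv i
  refine ⟨AlgEquiv.ofAlgHom φ ψ hφψ hψφ, fun f => ?_⟩
  rw [AlgEquiv.ofAlgHom_apply, MvPolynomial.aeval_rename, Sum.elim_comp_inl]
  exact (DFunLike.congr_fun (MvPolynomial.aeval_unique (linSubst a b c)) f).symm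

theorem exists_linSubst_eq_of_dvd_linSubst [NoZeroDivisors S] (hab : ∀ i, IsCoprime (a i) (b i))
    {f : MvPolynomial σ S} (hf : f ≠ 0) {h : MvPolynomial (σ ⊕ σ) S} (hdvd : h ∣ linSubst a b c f) :
    ∃ h₀, linSubst a b c h₀ = h := by
  obtain ⟨e, he⟩ := exists_algEquiv_rename_inl_eq_linSubst hab c
  rw [← he] at hdvd
  obtain ⟨h₀, hh₀⟩ := exists_rename_eq_of_dvd_rename Sum.inl_injective hf
    (h := e.symm h) (by rwa [← map_dvd_iff e, e.apply_symm_apply])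
  exact ⟨h₀, by rw [← he, hh₀, e.apply_symm_apply]⟩

theorem squarefree_linSubst [IsDomain S] (hab : ∀ i, IsCoprime (a i) (b i))
    {f : MvPolynomial σ S} (hf : Squarefree f) : Squarefree (linSubst a b c f) := by
  obtain ⟨e, he⟩ := exists_algEquiv_rename_inl_eq_linSubst hab c
  rw [← he]
  exact squarefree_map_equiv e (squarefree_rename Sum.inl_injective hf)

end LinSubst

section VanishingSubstitution

variable {σ R : Type*} [CommRing R] [NoZeroDivisors R] {a b c : σ → R[X]} {f : MvPolynomial σ R[X]}

theorem linSubst_pderiv_eq_zero_of_derivative_eq_zero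
    (hf : derivative (swapEquiv R (σ ⊕ σ) (linSubst a b c f)) = 0) {i : σ}
    (hab : wronskian (a i) (b i) ≠ 0) : linSubst a b c (MvPolynomial.pderiv i f) = 0 := by
  set G := swapEquiv R (σ ⊕ σ) (linSubst a b c (MvPolynomial.pderiv i f)) with hG
  let A := (a i).map (MvPolynomial.C (σ := σ ⊕ σ))
  let B := (b i).map (MvPolynomial.C (σ := σ ⊕ σ))
  have hA : derivative (A * G) = 0 := by
    have := derivative_swapEquiv_pderiv_eq_zero hf (.inl i)
    rwa [pderiv_inl_linSubst, map_mul, swapEquiv_C] at this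
  have hB : derivative (B * G) = 0 := by
    have := derivative_swapEquiv_pderiv_eq_zero hf (.inr i)
    rwa [pderiv_inr_linSubst, map_mul, swapEquiv_C] at this
  have hW : (wronskian (a i) (b i)).map (MvPolynomial.C (σ := σ ⊕ σ)) ≠ 0 :=
    (Polynomial.map_ne_zero_iff (MvPolynomial.C_injective _ _)).2 hab
  have hWG : (wronskian (a i) (b i)).map (MvPolynomial.C (σ := σ ⊕ σ)) * G = 0 := by
    rw [derivative_mul, derivative_map] at hA hB
    simp only [wronskian, Polynomial.map_sub, Polynomial.map_mul]
    linear_combination A * hB - B * hA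
  simpa [hW, hG] using hWG

theorem pderiv_linSubst_eq_zero_of_derivative_eq_zero
    (hf : derivative (swapEquiv R (σ ⊕ σ) (linSubst a b c f)) = 0)
    (hab : ∀ i, wronskian (a i) (b i) ≠ 0) (j : σ ⊕ σ) :
    MvPolynomial.pderiv j (linSubst a b c f) = 0 := by
  obtain i | i := j
  · rw [pderiv_inl_linSubst, linSubst_pderiv_eq_zero_of_derivative_eq_zero hf (hab i), mul_zero]
  · rw [pderiv_inr_linSubst, linSubst_pderiv_eq_zero_of_derivative_eq_zero hf (hab i), mul_zero]

theorem exists_pow_eq_linSubst (p : ℕ) [Fact p.Prime] [CharP R p] [PerfectRing R p]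
    (hf : derivative (swapEquiv R (σ ⊕ σ) (linSubst a b c f)) = 0)
    (hab : ∀ i, wronskian (a i) (b i) ≠ 0) : ∃ q, q ^ p = linSubst a b c f :=
  exists_pow_eq_of_pderiv_eq_zero p (pderiv_linSubst_eq_zero_of_derivative_eq_zero hf hab)
    fun s => exists_pow_eq_of_derivative_eq_zero p (derivative_swapEquiv_eq_zero_iff.1 hf s)

end VanishingSubstitution

section NonVanishing

variable {σ E : Type*} [Field E]

theorem derivativeResultant_swapEquiv_linSubst_ne_zero [PerfectField E] (p : ℕ) [CharP E p]
    {a b c : σ → E[X]} {f : MvPolynomial σ E[X]} (hf : Squarefree f)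
    (hab : ∀ i, IsCoprime (a i) (b i))
    (hp : (p = 0 ∨ (swapEquiv E (σ ⊕ σ) (linSubst a b c f)).natDegree < p) ∨
      ∀ i, wronskian (a i) (b i) ≠ 0) :
    derivativeResultant (swapEquiv E (σ ⊕ σ) (linSubst a b c f)) ≠ 0 := by
  set g := swapEquiv E (σ ⊕ σ) (linSubst a b c f) with hg
  have hgsq : Squarefree g := squarefree_map_equiv _ (squarefree_linSubst hab hf)
  refine mul_ne_zero (leadingCoeff_ne_zero.2 hgsq.ne_zero) fun hres => ?_
  obtain ⟨q, hq, hdeg, hqg, hqg'⟩ := exists_prime_dvd_dvd_of_resultant_eq_zero hgsq.ne_zero hres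
  have hq' : derivative q = 0 := derivative_eq_zero_of_prime_dvd_derivative hgsq hq hqg hqg'
  have hpdeg : p ∣ q.natDegree := dvd_of_derivative_eq_zero_of_coeff_ne_zero p hq'
    (leadingCoeff_ne_zero.2 hq.ne_zero)
  have hp0 : p ≠ 0 := fun h => hdeg (Nat.eq_zero_of_zero_dvd (h ▸ hpdeg))
  rcases hp with (hp | hlt) | hw
  · exact hp0 hp
  · exact hdeg (Nat.eq_zero_of_dvd_of_lt hpdeg
      ((natDegree_le_of_dvd hqg hgsq.ne_zero).trans_lt hlt))
  · have hprime : p.Prime := (CharP.char_is_prime_or_zero E p).resolve_right hp0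
    have := Fact.mk hprime
    obtain ⟨h, rfl⟩ := (swapEquiv E (σ ⊕ σ)).surjective q
    rw [hg, map_dvd_iff] at hqg
    obtain ⟨h₀, rfl⟩ := exists_linSubst_eq_of_dvd_linSubst hab hf.ne_zero hqg
    obtain ⟨r, hr⟩ := exists_pow_eq_linSubst p hq' hw
    refine not_irreducible_pow hprime.ne_one (x := r) ?_
    rw [hr, ← MulEquiv.irreducible_iff (swapEquiv E (σ ⊕ σ))]
    exact hq.irreducible

theorem derivativeResultant_swapEquiv_linSubst_ne_zero_of_squarefree_map {F : Type*} [Field F]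
    [Algebra F E] [PerfectField E] (p : ℕ) [CharP F p] {a b c : σ → F[X]} {f : MvPolynomial σ F[X]}
    (hf : Squarefree (MvPolynomial.map (mapRingHom (algebraMap F E)) f))
    (hab : ∀ i, IsCoprime (a i) (b i))
    (hp : (p = 0 ∨ (swapEquiv F (σ ⊕ σ) (linSubst a b c f)).natDegree < p) ∨
      ∀ i, wronskian (a i) (b i) ≠ 0) :
    derivativeResultant (swapEquiv F (σ ⊕ σ) (linSubst a b c f)) ≠ 0 := by
  let φ := algebraMap F E
  have hφ : Function.Injective φ := φ.injective
  have hΦ : Function.Injective (MvPolynomial.map (σ := σ ⊕ σ) φ) := MvPolynomial.map_injective φ hφ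
  have := charP_of_injective_algebraMap hφ p
  have hg : swapEquiv E (σ ⊕ σ) (linSubst (mapRingHom φ ∘ a) (mapRingHom φ ∘ b) (mapRingHom φ ∘ c)
      (MvPolynomial.map (mapRingHom φ) f)) =
      (swapEquiv F (σ ⊕ σ) (linSubst a b c f)).map (MvPolynomial.map φ) := by
    rw [linSubst_map, swapEquiv_map]
  rw [← map_ne_zero_iff _ hΦ, ← derivativeResultant_map_of_injective hΦ, ← hg]
  refine derivativeResultant_swapEquiv_linSubst_ne_zero p hf
    (fun i => (hab i).map (mapRingHom φ)) (hp.imp (Or.imp_right fun h => ?_) fun h i => ?_)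
  · rwa [hg, natDegree_map_eq_of_injective hΦ]
  · have hw : wronskian ((a i).map φ) ((b i).map φ) = (wronskian (a i) (b i)).map φ := by
      simp [wronskian, derivative_map]
    exact hw ▸ (Polynomial.map_ne_zero_iff hφ).2 (h i)

end NonVanishing

theorem exists_discriminant_poly_multivariate_general {F E σ : Type*} [Field F] [Field E]
    [Algebra F E] [PerfectField E] (p : ℕ) [CharP F p] {N : ℕ} {f : MvPolynomial σ F[X]}
    {a b c : σ → F[X]} (hf : Squarefree (MvPolynomial.map (mapRingHom (algebraMap F E)) f))
    (hab : ∀ i, IsCoprime (a i) (b i)) (hdeg : f.totalDegree ≤ N)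
    (hcoeff : ∀ s, (f.coeff s).natDegree ≤ N)
    (habc : ∀ i, (a i).natDegree ≤ N ∧ (b i).natDegree ≤ N ∧ (c i).natDegree ≤ N) :
    ∃ P : MvPolynomial (σ ⊕ σ) F,
      P.totalDegree ≤ N + 2 * (N + N * N) * N ∧
      (∀ β γ : σ → F,
        ¬ (MvPolynomial.eval (fun i => a i * C (β i) + b i * C (γ i) + c i) f).Separable →
        MvPolynomial.eval (Sum.elim β γ) P = 0) ∧
      ((p = 0 ∨ N + N * N < p) ∨ (∀ i, wronskian (a i) (b i) ≠ 0) → P ≠ 0) := by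
  let g := swapEquiv F (σ ⊕ σ) (linSubst a b c f)
  have hgdeg : g.natDegree ≤ N + N * N := natDegree_swapEquiv_linSubst_le hdeg hcoeff habc
  have hgcoeff (k : ℕ) : (g.coeff k).totalDegree ≤ N :=
    (totalDegree_coeff_swapEquiv_le _ k).trans ((totalDegree_linSubst_le a b c f).trans hdeg)
  refine ⟨derivativeResultant g, totalDegree_derivativeResultant_le hgcoeff hgdeg,
    fun β γ hsep => by_contra fun hne => hsep ?_, fun hp =>
    derivativeResultant_swapEquiv_linSubst_ne_zero_of_squarefree_map p hf hab
      (hp.imp_left (Or.imp_right hgdeg.trans_lt))⟩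
  rw [← map_eval_swapEquiv_linSubst]
  exact separable_map_of_isUnit_derivativeResultant _ (IsUnit.mk0 _ hne)

end

/-- For every `N` there are constants `C N`, `C' N` such that for any field
`F` of characteristic `p`, any `f ∈ F[t][x₁,…,x_d]` square-free over the algebraic closure
with `deg_t f ≤ N` and total `x`-degree at most `N`, and any `a_i, b_i, c_i ∈ F[t]` of degree
at most `N` with `gcd(a_i,b_i) = 1`, there is a polynomial `P` in `2d` variables of total
degree at most `C' N` vanishing at every `(β, γ) ∈ F^d × F^d` for which
`f(t, a₁β₁ + b₁γ₁ + c₁, …, a_dβ_d + b_dγ_d + c_d)` is not separable; moreover `P` can be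
chosen nonzero whenever `p = 0` or `p > C N`, or `a_i ≠ 0` and `b_i/a_i ∉ F(t^p)` for all
`i`. -/
theorem exists_discriminant_poly_multivariate (N : ℕ) :
    ∃ C C' : ℕ, ∀ (F : Type) [Field F] (d : ℕ),
      ∀ (f : MvPolynomial (Fin d) (Polynomial F)) (a b c : Fin d → Polynomial F),
        Squarefree
          (MvPolynomial.map (Polynomial.mapRingHom (algebraMap F (AlgebraicClosure F))) f) →
        (∀ i, IsRelPrime (a i) (b i)) →
        f.totalDegree ≤ N → (∀ s, (f.coeff s).natDegree ≤ N) →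
        (∀ i, (a i).natDegree ≤ N ∧ (b i).natDegree ≤ N ∧ (c i).natDegree ≤ N) →
        ∃ P : MvPolynomial (Fin d ⊕ Fin d) F,
          P.totalDegree ≤ C' ∧
          (∀ β γ : Fin d → F,
            ¬ (MvPolynomial.eval
                (fun i => a i * Polynomial.C (β i) + b i * Polynomial.C (γ i) + c i)
                f).Separable →
            MvPolynomial.eval (Sum.elim β γ) P = 0) ∧
          (((ringChar F = 0 ∨ C < ringChar F) ∨
              (∀ i, a i ≠ 0 ∧ notInFtp F (a i) (b i))) → P ≠ 0) := by
  refine ⟨N + N * N, N + 2 * (N + N * N) * N, fun F _ d f a b c hf hab hdeg hcoeff habc => ?_⟩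
  obtain ⟨P, hPdeg, hPsep, hPne⟩ := exists_discriminant_poly_multivariate_general (ringChar F) hf
    (fun i => (hab i).isCoprime) hdeg hcoeff habc
  exact ⟨P, hPdeg, hPsep, fun hp => hPne <| hp.imp_right fun h i =>
    wronskian_ne_zero_of_notInFtp (hab i).isCoprime (h i).2⟩
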